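/- Let F be a field with char(F) ≠ 2, let n ≥ 2, and let T : M_n(F) → M_n(F) be a bijective linear map. Then T(I) = I and T(C_n) ⊆ C_n hold if and only if there exists an invertible matrix P ∈ M_n(F) such that either T(X) = P·X·P⁻¹ for all X ∈ M_n(F), or T(X) = P·Xᵗ·P⁻¹ for all X ∈ M_n(F). -/

import Mathlib

open Matrix

/-- The set of matrices that are products of three involutions. -/
def ProdInv3 (F : Type*) [Field F] (n : ℕ) : Set (Matrix (Fin n) (Fin n) F) :=
  {A | ∃ J₁ J₂ J₃ : Matrix (Fin n) (Fin n) F,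
    J₁ * J₁ = 1 ∧ J₂ * J₂ = 1 ∧ J₃ * J₃ = 1 ∧ A = J₁ * J₂ * J₃}

/-!
Let `T*` be the adjoint of `T` for the trace form `(A, B) ↦ tr (A * B)`. For `u ≠ 0` the matrices
orthogonal to all `T* (u pᵗ)` are the `X` with `T X *ᵥ u = 0`; since `T` maps products of three
involutions to invertible matrices, no such product is orthogonal to the `n`-dimensional space
`{T* (u pᵗ)}`. When `2 ≠ 0` every unipotent `U` is a product of two involutions: `U` is the Cayley
transform of a nilpotent `S`, and an involution that anticommutes with `S` conjugates `U` to `U⁻¹`.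
So no product of an involution and a unipotent is orthogonal to that space either.

For `n ≥ 3`, an `n`-dimensional space of endomorphisms with this property consists of maps of rank
at most one; otherwise, an induction that splits off a plane constructs an orthogonal product. Hence
`T*` maps rank-one matrices to rank-one matrices, which forces `T* Y = Q * Y * R` or
`T* Y = Q * Yᵗ * R`, and `T` has the same form.

For `n = 2`, let `N` have rank one and choose an involution `J` with `(J * N) ^ 2 = 0`. Then all
`J + t • N` are products of three involutions, so `det (T (J + t • N)) ^ 2 = 1` for all `t`. This
forces `det (T N) = 0` as soon as `F` has more than three elements. Over the field with three
elements the products of three involutions are exactly the invertible matrices, and since `T`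
permutes a finite set, it preserves singularity as well.
-/

section ModularLattice

variable {α : Type*} [Lattice α] [BoundedOrder α] [IsModularLattice α] [ComplementedLattice α]

lemma exists_le_disjoint_sup_eq {a b c : α} (hac : Disjoint a c) (ha : a ≤ b) (hc : c ≤ b) :
    ∃ d, c ≤ d ∧ d ≤ b ∧ Disjoint a d ∧ a ⊔ d = b := by
  obtain ⟨e, he, hsup⟩ := IsModularLattice.exists_disjoint_and_sup_eq (sup_le ha hc)
  rw [sup_assoc] at hsup
  exact ⟨c ⊔ e, le_sup_left, hsup ▸ le_sup_right,
    hac.disjoint_sup_right_of_disjoint_sup_left he, hsup⟩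

lemma exists_disjoint_between {a₀ a₁ b₀ b₁ : α} (ha : Disjoint a₀ a₁) (h₀ : a₀ ≤ b₀)
    (h₁ : a₁ ≤ b₁) :
    ∃ c₀ c₁, a₀ ≤ c₀ ∧ c₀ ≤ b₀ ∧ a₁ ≤ c₁ ∧ c₁ ≤ b₁ ∧ Disjoint c₀ c₁ ∧ c₀ ⊔ c₁ = b₀ ⊔ b₁ := by
  obtain ⟨c₁, hac₁, hcb₁, hdisj₁, hsup₁⟩ :=
    exists_le_disjoint_sup_eq (ha.mono_left inf_le_left) (inf_le_right (a := a₀) (b := b₁)) h₁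
  have hc₁a₀ : Disjoint (c₁ ⊓ b₀) a₀ := by
    rw [disjoint_iff_inf_le, ← disjoint_iff_inf_le.mp hdisj₁ |>.antisymm bot_le]
    exact le_inf (le_inf inf_le_right ((inf_le_left.trans inf_le_left).trans hcb₁))
      (inf_le_left.trans inf_le_left)
  obtain ⟨c₀, hac₀, hcb₀, hdisj₀, hsup₀⟩ := exists_le_disjoint_sup_eq hc₁a₀ inf_le_right h₀
  refine ⟨c₀, c₁, hac₀, hcb₀, hac₁, hcb₁, ?_, (sup_le_sup hcb₀ hcb₁).antisymm (sup_le ?_ ?_)⟩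
  · exact disjoint_iff_inf_le.mpr <|
      (le_inf (le_inf inf_le_right (inf_le_left.trans hcb₀)) inf_le_left).trans hdisj₀.le_bot
  · exact hsup₀ ▸ sup_le (inf_le_left.trans le_sup_right) le_sup_left
  · exact hsup₁ ▸ sup_le (inf_le_left.trans (hac₀.trans le_sup_left)) le_sup_right

end ModularLattice

section Cayley

variable {R : Type*} [Ring R]

lemma involution_mul_of_anticommute {K S N : R} (hK : K * K = 1) (hKS : K * S = -(S * K))
    (hS : IsUnit (1 - S)) (hN : (1 + N) * (1 - S) = 1 + S) :
    K * (1 + N) * (K * (1 + N)) = 1 := by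
  have hcomm : K * (1 + S) = (1 - S) * K := by rw [mul_add, hKS]; noncomm_ring
  refine hS.mul_right_cancel ?_
  calc K * (1 + N) * (K * (1 + N)) * (1 - S)
      = K * (1 + N) * (K * ((1 + N) * (1 - S))) := by simp only [mul_assoc]
    _ = K * (1 + N) * ((1 - S) * K) := by rw [hN, hcomm]
    _ = K * ((1 + N) * (1 - S)) * K := by simp only [mul_assoc]
    _ = 1 * (1 - S) := by rw [hN, hcomm, mul_assoc, hK, mul_one, one_mul]

lemma exists_nilpotent_cayley {N : R} (h2 : IsUnit (2 : R)) (hN : IsNilpotent N) :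
    ∃ S : R, IsNilpotent S ∧ (1 + N) * (1 - S) = 1 + S := by
  have h2N : Commute 2 N := Nat.cast_commute 2 N
  obtain ⟨u, hu⟩ := hN.isUnit_add_left_of_commute h2 h2N.symm
  have hcomm : Commute N (u : R) := hu ▸ (h2N.symm).add_right (Commute.refl N)
  refine ⟨N * ↑u⁻¹, hcomm.units_inv_right.isNilpotent_mul_right hN, ?_⟩
  have h2u : (2 + N) * (↑u⁻¹ : R) = 1 := by rw [← hu]; exact u.mul_inv
  linear_combination (norm := noncomm_ring) -N * h2u

end Cayley

section Nilpotent

variable {F V : Type*} [Field F] [AddCommGroup V] [Module F V]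

lemma exists_disjoint_map_le_of_map_pow_eq_bot (S : Module.End F V) (k : ℕ) :
    ∀ I : Submodule F V, I.map S ≤ I → I.map (S ^ k) = ⊥ →
      ∃ V₀ V₁ : Submodule F V,
        Disjoint V₀ V₁ ∧ V₀ ⊔ V₁ = I ∧ V₀.map S ≤ V₁ ∧ V₁.map S ≤ V₀ := by
  induction k with
  | zero =>
    intro I _ hI
    rw [pow_zero, Module.End.one_eq_id, Submodule.map_id] at hI
    exact ⟨⊥, ⊥, disjoint_bot_left, by simp [hI], by simp, by simp⟩
  | succ k ih =>
    intro I hSI hI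
    obtain ⟨R₀, R₁, hR, hsup, h₀₁, h₁₀⟩ := ih (I.map S) (Submodule.map_mono hSI)
      (by rw [← hI, pow_succ, Module.End.mul_eq_comp, Submodule.map_comp])
    have hR₀I : R₀ ≤ I.map S := hsup ▸ le_sup_left
    have hR₁I : R₁ ≤ I.map S := hsup ▸ le_sup_right
    obtain ⟨V₀, V₁, hRV₀, hV₀, hRV₁, hV₁, hdisj, hV⟩ := exists_disjoint_between hR
      (le_inf (hR₀I.trans hSI) (Submodule.map_le_iff_le_comap.mp h₀₁))
      (le_inf (hR₁I.trans hSI) (Submodule.map_le_iff_le_comap.mp h₁₀))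
    refine ⟨V₀, V₁, hdisj, hV.trans ((sup_le inf_le_left inf_le_left).antisymm fun x hx => ?_),
      ?_, ?_⟩
    · obtain ⟨r₀, hr₀, r₁, hr₁, hr⟩ :=
        Submodule.mem_sup.mp (hsup ▸ Submodule.mem_map_of_mem hx : S x ∈ R₀ ⊔ R₁)
      obtain ⟨y, hy, rfl⟩ := hR₀I hr₀
      refine Submodule.mem_sup.mpr ⟨x - y, ⟨I.sub_mem hx hy, ?_⟩, y, ⟨hy, hr₀⟩, sub_add_cancel x y⟩
      simpa [← hr] using hr₁
    · exact Submodule.map_le_iff_le_comap.mpr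
        ((hV₀.trans inf_le_right).trans (Submodule.comap_mono hRV₁))
    · exact Submodule.map_le_iff_le_comap.mpr
        ((hV₁.trans inf_le_right).trans (Submodule.comap_mono hRV₀))

lemma exists_involution_anticommute {S : Module.End F V} (hS : IsNilpotent S) :
    ∃ K : Module.End F V, K * K = 1 ∧ K * S = -(S * K) := by
  obtain ⟨k, hk⟩ := hS
  obtain ⟨V₀, V₁, hdisj, hsup, h₀₁, h₁₀⟩ :=
    exists_disjoint_map_le_of_map_pow_eq_bot S k ⊤ le_top (by simp [hk])
  have hc : IsCompl V₀ V₁ := ⟨hdisj, codisjoint_iff.mpr hsup⟩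
  set p : Module.End F V := V₀.projection V₁ hc
  have hp : p * p = p := Submodule.isIdempotentElem_projection hc
  have hpS : p * S + S * p = S := by
    ext x
    obtain ⟨x₀, hx₀, x₁, hx₁, rfl⟩ := Submodule.mem_sup.mp (hsup ▸ Submodule.mem_top : x ∈ V₀ ⊔ V₁)
    have e₀ : p x₀ = x₀ := Submodule.projection_apply_left hc ⟨x₀, hx₀⟩
    have e₁ : p x₁ = 0 := (Submodule.projection_apply_eq_zero_iff hc).mpr hx₁
    have e₂ : p (S x₀) = 0 :=
      (Submodule.projection_apply_eq_zero_iff hc).mpr (h₀₁ (Submodule.mem_map_of_mem hx₀))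
    have e₃ : p (S x₁) = S x₁ :=
      Submodule.projection_apply_left hc ⟨S x₁, h₁₀ (Submodule.mem_map_of_mem hx₁)⟩
    simp [e₀, e₁, e₂, e₃, add_comm]
  refine ⟨p + p - 1, ?_, ?_⟩
  · linear_combination (norm := noncomm_ring) 4 * hp
  · linear_combination (norm := noncomm_ring) 2 * hpS

lemma exists_involution_mul_involution_of_isNilpotent_sub_one (h2 : (2 : F) ≠ 0)
    {U : Module.End F V} (hU : IsNilpotent (U - 1)) :
    ∃ K L : Module.End F V, K * K = 1 ∧ L * L = 1 ∧ U = K * L := by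
  have h2' : IsUnit (2 : Module.End F V) := by
    simpa only [map_ofNat] using (IsUnit.mk0 (2 : F) h2).map (algebraMap F (Module.End F V))
  obtain ⟨S, hS, hUS⟩ := exists_nilpotent_cayley h2' hU
  obtain ⟨K, hK, hKS⟩ := exists_involution_anticommute hS
  refine ⟨K, K * U, hK, ?_, by rw [← mul_assoc, hK, one_mul]⟩
  simpa using involution_mul_of_anticommute hK hKS hS.isUnit_one_sub hUS

end Nilpotent

section ProdInv3

variable {F : Type*} [Field F] {n : ℕ} {A : Matrix (Fin n) (Fin n) F}

lemma mem_prodInv3_of_isNilpotent_mul_sub_one (h2 : (2 : F) ≠ 0)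
    {J : Matrix (Fin n) (Fin n) F} (hJ : J * J = 1) (hA : IsNilpotent (J * A - 1)) :
    A ∈ ProdInv3 F n := by
  have hU : IsNilpotent (toLinAlgEquiv' (J * A) - 1) := by
    simpa using hA.map (toLinAlgEquiv' (R := F) (n := Fin n))
  obtain ⟨K, L, hK, hL, hKL⟩ := exists_involution_mul_involution_of_isNilpotent_sub_one h2 hU
  refine ⟨J, toLinAlgEquiv'.symm K, toLinAlgEquiv'.symm L, hJ, ?_, ?_, ?_⟩
  · rw [← map_mul, hK, map_one]
  · rw [← map_mul, hL, map_one]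
  · rw [mul_assoc, ← map_mul, ← hKL, AlgEquiv.symm_apply_apply, ← mul_assoc, hJ, one_mul]

lemma ProdInv3.isUnit (hA : A ∈ ProdInv3 F n) : IsUnit A := by
  obtain ⟨J₁, J₂, J₃, h₁, h₂, h₃, rfl⟩ := hA
  exact ((IsUnit.of_mul_eq_one _ h₁).mul (IsUnit.of_mul_eq_one _ h₂)).mul
    (IsUnit.of_mul_eq_one _ h₃)

lemma ProdInv3.det_sq (hA : A ∈ ProdInv3 F n) : A.det ^ 2 = 1 := by
  obtain ⟨J₁, J₂, J₃, h₁, h₂, h₃, rfl⟩ := hA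
  have hdet (J : Matrix (Fin n) (Fin n) F) (hJ : J * J = 1) : J.det ^ 2 = 1 := by
    rw [sq, ← det_mul, hJ, det_one]
  simp only [det_mul, mul_pow, hdet _ h₁, hdet _ h₂, hdet _ h₃, one_mul]

lemma ProdInv3.conj {P : Matrix (Fin n) (Fin n) F} (hP : IsUnit P) (hA : A ∈ ProdInv3 F n) :
    P * A * P⁻¹ ∈ ProdInv3 F n := by
  obtain ⟨J₁, J₂, J₃, h₁, h₂, h₃, rfl⟩ := hA
  have hP' : P⁻¹ * P = 1 := nonsing_inv_mul P ((isUnit_iff_isUnit_det P).mp hP)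
  have hP'' : P * P⁻¹ = 1 := mul_nonsing_inv P ((isUnit_iff_isUnit_det P).mp hP)
  have hmul (X Y : Matrix (Fin n) (Fin n) F) :
      P * X * P⁻¹ * (P * Y * P⁻¹) = P * (X * Y) * P⁻¹ := by
    calc P * X * P⁻¹ * (P * Y * P⁻¹) = P * X * (P⁻¹ * P) * Y * P⁻¹ := by noncomm_ring
      _ = P * (X * Y) * P⁻¹ := by rw [hP']; noncomm_ring
  refine ⟨P * J₁ * P⁻¹, P * J₂ * P⁻¹, P * J₃ * P⁻¹, ?_, ?_, ?_, ?_⟩ <;>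
    simp only [hmul, h₁, h₂, h₃, mul_one, hP'']

lemma ProdInv3.transpose (hA : A ∈ ProdInv3 F n) : Aᵀ ∈ ProdInv3 F n := by
  obtain ⟨J₁, J₂, J₃, h₁, h₂, h₃, rfl⟩ := hA
  refine ⟨J₃ᵀ, J₂ᵀ, J₁ᵀ, ?_, ?_, ?_, ?_⟩ <;>
    simp only [← transpose_mul, h₁, h₂, h₃, transpose_one, mul_assoc]

end ProdInv3

section Separation

variable {F U E : Type*} [Field F] [AddCommGroup U] [Module F U] [AddCommGroup E] [Module F E]

lemma exists_dual_eq_one_of_notMem {p : Submodule F U} {u : U} (hu : u ∉ p) :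
    ∃ ψ : Module.Dual F U, ψ u = 1 ∧ ∀ x ∈ p, ψ x = 0 := by
  obtain ⟨ψ, hψ, hp⟩ := Submodule.exists_le_ker_of_notMem hu
  refine ⟨(ψ u)⁻¹ • ψ, by simp [hψ], fun x hx => ?_⟩
  simp [LinearMap.mem_ker.mp (hp hx)]

lemma exists_dual_eq_one_and_ne_zero {p : Submodule F U} {u v : U} (hu : u ∉ p) (hv : v ∉ p) :
    ∃ ψ : Module.Dual F U, ψ u = 1 ∧ ψ v ≠ 0 ∧ ∀ x ∈ p, ψ x = 0 := by
  obtain ⟨α, hαu, hαp⟩ := exists_dual_eq_one_of_notMem hu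
  obtain ⟨β, hβv, hβp⟩ := exists_dual_eq_one_of_notMem hv
  by_cases hαv : α v = 0
  · by_cases hβu : β u = 0
    · exact ⟨α + β, by simp [hαu, hβu], by simp [hαv, hβv],
        fun x hx => by simp [hαp x hx, hβp x hx]⟩
    · exact ⟨(β u)⁻¹ • β, by simp [hβu], by simp [hβu, hβv], fun x hx => by simp [hβp x hx]⟩
  · exact ⟨α, hαu, hαv, hαp⟩

variable {τ : Module.Dual F E} {φ : E →ₗ[F] U} {W : Submodule F E}

lemma exists_dual_comp_eq_of_inf_ker (hτ : ∀ A ∈ W ⊓ LinearMap.ker φ, τ A = 0) :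
    ∃ μ : Module.Dual F U, ∀ A ∈ W, μ (φ A) = τ A := by
  have hmem : τ.domRestrict W ∈ (φ.domRestrict W).dualMap.range := by
    rw [LinearMap.range_dualMap_eq_dualAnnihilator_ker, Submodule.mem_dualAnnihilator]
    exact fun A hA => hτ A ⟨A.2, hA⟩
  obtain ⟨μ, hμ⟩ := hmem
  exact ⟨μ, fun A hA => LinearMap.congr_fun hμ ⟨A, hA⟩⟩

lemma exists_dual_comp_eq_and_eq_one (hτ : ∀ A ∈ W ⊓ LinearMap.ker φ, τ A = 0) {u : U}
    (hu : u ∉ W.map φ) :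
    ∃ μ : Module.Dual F U, μ u = 1 ∧ ∀ A ∈ W, μ (φ A) = τ A := by
  obtain ⟨μ, hμ⟩ := exists_dual_comp_eq_of_inf_ker hτ
  obtain ⟨ψ, hψu, hψ⟩ := exists_dual_eq_one_of_notMem hu
  refine ⟨μ + (1 - μ u) • ψ, by simp [hψu], fun A hA => ?_⟩
  simp [hμ A hA, hψ _ (Submodule.mem_map_of_mem hA)]

lemma finrank_map_add_finrank_inf_ker [FiniteDimensional F E] (φ : E →ₗ[F] U)
    (W : Submodule F E) :
    Module.finrank F (W.map φ) + Module.finrank F ↥(W ⊓ LinearMap.ker φ) = Module.finrank F W := by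
  rw [← (φ.domRestrict W).finrank_range_add_finrank_ker, LinearMap.range_domRestrict,
    LinearMap.ker_domRestrict, ← Submodule.finrank_map_subtype_eq, Submodule.map_comap_subtype]

lemma exists_dual_notMem_of_finrank_lt [FiniteDimensional F U] {f g : U}
    (hfg : f ∉ F ∙ g) {L : Submodule F (Module.Dual F U)}
    (hL : Module.finrank F L + 2 ≤ Module.finrank F U) :
    ∃ φ : Module.Dual F U, φ f = 1 ∧ φ g = 0 ∧ φ ∉ L := by
  obtain ⟨α, hαf, hα⟩ := exists_dual_eq_one_of_notMem hfg
  have hαg : α g = 0 := hα g (Submodule.mem_span_singleton_self g)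
  by_cases hαL : α ∈ L
  swap
  · exact ⟨α, hαf, hαg, hαL⟩
  obtain ⟨ψ, hψg, hψL⟩ : ∃ ψ : Module.Dual F U, ψ g = 0 ∧ ψ ∉ L := by
    by_contra! h
    have hle : Module.finrank F (LinearMap.ker (Module.Dual.eval F U g)) ≤ Module.finrank F L :=
      Submodule.finrank_mono fun ψ hψ => h ψ hψ
    have hker := (Module.Dual.eval F U g).finrank_range_add_finrank_ker
    have hrange := (LinearMap.range (Module.Dual.eval F U g)).finrank_le
    rw [Module.finrank_self] at hrange
    rw [Subspace.dual_finrank_eq] at hker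
    omega
  by_cases hψf : ψ f = 0
  · refine ⟨α + ψ, by simp [hαf, hψf], by simp [hαg, hψg], fun h => hψL ?_⟩
    simpa using L.sub_mem h hαL
  · refine ⟨(ψ f)⁻¹ • ψ, by simp [hψf], by simp [hψg], fun h => hψL ?_⟩
    simpa [hψf] using L.smul_mem (ψ f) h

end Separation

/-- Two vectors `f`, `g` with a dual pair of functionals `φ`, `ℓ`. It splits the space as
`F f ⊕ F g ⊕ core`, where `core` is the common kernel of `φ` and `ℓ`; this is the block
decomposition along which dimensions are reduced by two. -/
structure BiorthogonalPair (F V : Type*) [Field F] [AddCommGroup V] [Module F V] where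
  f : V
  g : V
  φ : Module.Dual F V
  ℓ : Module.Dual F V
  φ_f : φ f = 1
  φ_g : φ g = 0
  ℓ_f : ℓ f = 0
  ℓ_g : ℓ g = 1

namespace BiorthogonalPair

variable {F V : Type*} [Field F] [AddCommGroup V] [Module F V] (P : BiorthogonalPair F V)

/-- The common kernel of the two functionals, a complement of the span of the two vectors. -/
def core : Submodule F V := LinearMap.ker P.φ ⊓ LinearMap.ker P.ℓ

/-- The projection onto the core along the span of the two vectors. -/
def proj : V →ₗ[F] P.core :=
  (LinearMap.id - P.φ.smulRight P.f - P.ℓ.smulRight P.g).codRestrict P.core fun x => by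
    simp [core, P.φ_f, P.φ_g, P.ℓ_f, P.ℓ_g]

/-- The block of an endomorphism acting on the core. -/
def compress : Module.End F V →ₗ[F] Module.End F P.core :=
  (LinearMap.lcomp F P.core P.core.subtype).comp (LinearMap.llcomp F V V P.core P.proj)

/-- The endomorphism with block `X` on the core and the rank-one terms `μ ⊗ g` and `ℓ ⊗ y`. -/
def extend (X : Module.End F P.core) (μ : Module.Dual F V) (y : V) : Module.End F V :=
  P.core.subtype ∘ₗ X ∘ₗ P.proj + μ.smulRight P.g + P.ℓ.smulRight y

/-- The extension of `J` exchanging the two vectors of the pair. -/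
def swap (J : Module.End F P.core) : Module.End F V :=
  P.extend J P.φ P.f

lemma coe_proj (x : V) : (P.proj x : V) = x - P.φ x • P.f - P.ℓ x • P.g := rfl

@[simp] lemma φ_core (c : P.core) : P.φ c = 0 := c.2.1

@[simp] lemma ℓ_core (c : P.core) : P.ℓ c = 0 := c.2.2

@[simp] lemma proj_core (c : P.core) : P.proj c = c := Subtype.ext (by simp [coe_proj])

@[simp] lemma proj_f : P.proj P.f = 0 := Subtype.ext (by simp [coe_proj, P.φ_f, P.ℓ_f])

@[simp] lemma proj_g : P.proj P.g = 0 := Subtype.ext (by simp [coe_proj, P.φ_g, P.ℓ_g])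

@[simp] lemma compress_apply (A : Module.End F V) (c : P.core) :
    P.compress A c = P.proj (A c) := rfl

@[simp] lemma extend_apply (X : Module.End F P.core) (μ : Module.Dual F V) (y x : V) :
    P.extend X μ y x = X (P.proj x) + μ x • P.g + P.ℓ x • y := rfl

lemma swap_apply (J : Module.End F P.core) (x : V) :
    P.swap J x = J (P.proj x) + P.φ x • P.g + P.ℓ x • P.f := rfl

lemma finrank_core_add_two [FiniteDimensional F V] :
    Module.finrank F P.core + 2 = Module.finrank F V := by
  have hφ := finrank_map_add_finrank_inf_ker P.ℓ (LinearMap.ker P.φ)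
  have hmap : (LinearMap.ker P.φ).map P.ℓ = ⊤ :=
    eq_top_iff.mpr fun c _ => ⟨c • P.g, by simp [P.φ_g], by simp [P.ℓ_g]⟩
  have hφ0 : P.φ ≠ 0 := fun h => by simpa [h] using P.φ_f
  have := Module.Dual.finrank_ker_add_one_of_ne_zero hφ0
  rw [hmap, finrank_top, Module.finrank_self] at hφ
  change Module.finrank F ↥(LinearMap.ker P.φ ⊓ LinearMap.ker P.ℓ) + 2 = _
  omega

lemma trace_mul_extend [FiniteDimensional F V] (A : Module.End F V) (X : Module.End F P.core)
    (μ : Module.Dual F V) (y : V) :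
    LinearMap.trace F V (A * P.extend X μ y) =
      LinearMap.trace F P.core (P.compress A * X) + μ (A P.g) + P.ℓ (A y) := by
  have hA : A * P.extend X μ y = (A ∘ₗ P.core.subtype ∘ₗ X) ∘ₗ P.proj + μ.smulRight (A P.g) +
      P.ℓ.smulRight (A y) := by
    ext x; simp
  rw [hA, map_add, map_add, LinearMap.trace_smulRight, LinearMap.trace_smulRight,
    LinearMap.trace_comp_comm']
  rfl

lemma swap_mul_swap {J : Module.End F P.core} (hJ : J * J = 1) : P.swap J * P.swap J = 1 := by
  have hJ' (c : P.core) : J (J c) = c := LinearMap.congr_fun hJ c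
  ext x
  simp [swap_apply, hJ', coe_proj, P.φ_f, P.φ_g, P.ℓ_f, P.ℓ_g]

variable {P} in
-- The operator preserves `0 ⊆ F ∙ P.f ⊆ ker P.ℓ ⊆ V`, acts as `J * X - 1` on the middle quotient
-- (the core), and as zero on the other two.
lemma isNilpotent_swap_mul_extend_sub_one {J X : Module.End F P.core} {μ : Module.Dual F V}
    {y : V} (hJX : IsNilpotent (J * X - 1)) (hμ : μ P.f = 1) (hy : P.φ y = 1) :
    IsNilpotent (P.swap J * P.extend X μ y - 1) := by
  obtain ⟨k, hk⟩ := hJX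
  set N := P.swap J * P.extend X μ y - 1 with hN
  have hNx (x : V) : N x =
      J (X (P.proj x) + P.ℓ x • P.proj y) + P.ℓ x • P.g + (μ x + P.ℓ x * P.ℓ y) • P.f - x := by
    simp [hN, swap_apply, P.φ_g, P.ℓ_g, hy, add_smul, mul_smul]
  have hℓN (x : V) : P.ℓ (N x) = 0 := by simp [hNx, P.ℓ_f, P.ℓ_g]
  have hNf : N P.f = 0 := by simp [hNx, P.ℓ_f, hμ]
  have hproj {x : V} (hx : P.ℓ x = 0) : P.proj (N x) = (J * X - 1) (P.proj x) := by
    simp [hNx, hx]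
  have hprojpow (x : V) (j : ℕ) : P.proj ((N ^ (j + 1)) x) = ((J * X - 1) ^ j) (P.proj (N x)) := by
    induction j with
    | zero => simp
    | succ j ih =>
      have hℓ : P.ℓ ((N ^ (j + 1)) x) = 0 := by
        rw [pow_succ', Module.End.mul_apply, hℓN]
      rw [pow_succ', Module.End.mul_apply, hproj hℓ, ih, pow_succ' _ j, Module.End.mul_apply]
  refine ⟨k + 2, LinearMap.ext fun x => ?_⟩
  have hzero : P.proj ((N ^ (k + 1)) x) = 0 := by rw [hprojpow, hk, LinearMap.zero_apply]
  have hline : (N ^ (k + 1)) x = P.φ ((N ^ (k + 1)) x) • P.f := by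
    have := P.coe_proj ((N ^ (k + 1)) x)
    rw [hzero, pow_succ', Module.End.mul_apply, hℓN] at this
    rw [pow_succ', Module.End.mul_apply]
    simpa [eq_comm (a := (0:V)), sub_eq_zero] using this
  rw [pow_succ', Module.End.mul_apply, hline, map_smul, hNf, smul_zero, LinearMap.zero_apply]

end BiorthogonalPair

section TraceOrthogonal

/-- Some product of an involution and a unipotent is orthogonal to `W` for the trace form.
Spaces without this property are the ones that a preserver of such products can produce. -/
def HasInvUnipOrthogonal {F V : Type*} [Field F] [AddCommGroup V] [Module F V]
    (W : Submodule F (Module.End F V)) : Prop :=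
  ∃ J X : Module.End F V, J * J = 1 ∧ IsNilpotent (J * X - 1) ∧
    ∀ A ∈ W, LinearMap.trace F V (A * X) = 0

/-- Evaluation of endomorphisms at a vector. -/
def evalAt {F V : Type*} [Field F] [AddCommGroup V] [Module F V] (g : V) :
    Module.End F V →ₗ[F] V :=
  LinearMap.applyₗ g

@[simp] lemma evalAt_apply {F V : Type*} [Field F] [AddCommGroup V] [Module F V] (g : V)
    (A : Module.End F V) : evalAt g A = A g := rfl

/-- Composition of endomorphisms with a functional on the left. -/
def leftComp {F V : Type*} [Field F] [AddCommGroup V] [Module F V] (ℓ : Module.Dual F V) :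
    Module.End F V →ₗ[F] Module.Dual F V :=
  LinearMap.llcomp F V V F ℓ

variable {F : Type*} [Field F] {V : Type*} [AddCommGroup V] [Module F V]
  [FiniteDimensional F V] {W : Submodule F (Module.End F V)}

omit [FiniteDimensional F V] in
lemma exists_notMem_notMem {p q : Submodule F V} (hp : p ≠ ⊤) (hq : q ≠ ⊤) :
    ∃ x, x ∉ p ∧ x ∉ q := by
  obtain ⟨x, -, hx⟩ := SetLike.exists_of_lt hp.lt_top
  obtain ⟨y, -, hy⟩ := SetLike.exists_of_lt hq.lt_top
  by_cases hxq : x ∈ q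
  swap
  · exact ⟨x, hx, hxq⟩
  by_cases hyp : y ∈ p
  swap
  · exact ⟨y, hyp, hy⟩
  exact ⟨x + y, (p.add_mem_iff_left hyp).not.mpr hx, (q.add_mem_iff_right hxq).not.mpr hy⟩

omit [FiniteDimensional F V] in
lemma hasInvUnipOrthogonal_bot : HasInvUnipOrthogonal (⊥ : Submodule F (Module.End F V)) :=
  ⟨1, 1, one_mul 1, by simp, fun A hA => by simp [(Submodule.mem_bot F).mp hA]⟩

lemma BiorthogonalPair.hasInvUnipOrthogonal (P : BiorthogonalPair F V)
    {J X : Module.End F P.core} {μ : Module.Dual F V} {y : V} (hJ : J * J = 1)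
    (hJX : IsNilpotent (J * X - 1)) (hμ : μ P.f = 1) (hy : P.φ y = 1)
    (h : ∀ A ∈ W, LinearMap.trace F P.core (P.compress A * X) + μ (A P.g) + P.ℓ (A y) = 0) :
    HasInvUnipOrthogonal W :=
  ⟨P.swap J, P.extend X μ y, P.swap_mul_swap hJ, isNilpotent_swap_mul_extend_sub_one hJX hμ hy,
    fun A hA => (P.trace_mul_extend A X μ y).trans (h A hA)⟩

lemma BiorthogonalPair.hasInvUnipOrthogonal_of_compress (P : BiorthogonalPair F V)
    {K : Submodule F (Module.End F V)} (hK : K = W ⊓ LinearMap.ker (evalAt P.g))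
    (hf : P.f ∉ W.map (evalAt P.g))
    (hφ : P.φ ∉ K.map (leftComp P.ℓ))
    (hcore : HasInvUnipOrthogonal
      ((K ⊓ LinearMap.ker (leftComp P.ℓ)).map P.compress)) :
    HasInvUnipOrthogonal W := by
  obtain ⟨J, X, hJ, hJX, htr⟩ := hcore
  set τ : Module.Dual F (Module.End F V) :=
    LinearMap.trace F P.core ∘ₗ LinearMap.mulRight F X ∘ₗ P.compress with hτ
  obtain ⟨ν, hν, hνK⟩ := exists_dual_comp_eq_and_eq_one (τ := -τ)
    (fun A hA => by simpa [hτ] using htr _ (Submodule.mem_map_of_mem hA)) hφ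
  obtain ⟨y, rfl⟩ := (Module.evalEquiv F V).surjective ν
  set σ : Module.Dual F (Module.End F V) := P.ℓ ∘ₗ evalAt y with hσ
  obtain ⟨μ, hμ, hμW⟩ := exists_dual_comp_eq_and_eq_one (τ := -(τ + σ)) (W := W)
    (fun A hA => by
      have : P.ℓ (A y) = -τ A := hνK A (hK ▸ hA)
      simp [hσ, this]) hf
  refine P.hasInvUnipOrthogonal hJ hJX hμ hν fun A hA => ?_
  have : μ (A P.g) = -(τ A + σ A) := hμW A hA
  rw [this]
  simp only [hτ, hσ, LinearMap.comp_apply, LinearMap.mulRight_apply, evalAt_apply]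
  ring

lemma exists_biorthogonalPair {f g : V} (hg : g ≠ 0) (hfg : f ∉ F ∙ g)
    {K : Submodule F (Module.End F V)} (hK : Module.finrank F K + 2 ≤ Module.finrank F V) :
    ∃ P : BiorthogonalPair F V, P.f = f ∧ P.g = g ∧
      P.φ ∉ K.map (leftComp P.ℓ) ∧
      ((∀ A ∈ K, ∀ x, A x ∈ F ∙ f) ∨ ∃ A ∈ K, P.ℓ ∘ₗ A ≠ 0) := by
  have hgf : g ∉ F ∙ f := by
    intro h
    obtain ⟨c, rfl⟩ := Submodule.mem_span_singleton.mp h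
    exact hfg (Submodule.mem_span_singleton.mpr ⟨c⁻¹, inv_smul_smul₀ (left_ne_zero_of_smul hg) f⟩)
  obtain ⟨ℓ, hℓg, hℓf, hℓ⟩ : ∃ ℓ : Module.Dual F V, ℓ g = 1 ∧ ℓ f = 0 ∧
      ((∀ A ∈ K, ∀ x, A x ∈ F ∙ f) ∨ ∃ A ∈ K, ℓ ∘ₗ A ≠ 0) := by
    by_cases h : ∀ A ∈ K, ∀ x, A x ∈ F ∙ f
    · obtain ⟨ℓ, hℓg, hℓ⟩ := exists_dual_eq_one_of_notMem hgf
      exact ⟨ℓ, hℓg, hℓ f (Submodule.mem_span_singleton_self f), .inl h⟩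
    · push Not at h
      obtain ⟨A, hA, x, hx⟩ := h
      obtain ⟨ℓ, hℓg, hℓA, hℓ⟩ := exists_dual_eq_one_and_ne_zero hgf hx
      exact ⟨ℓ, hℓg, hℓ f (Submodule.mem_span_singleton_self f),
        .inr ⟨A, hA, fun h₀ => hℓA (LinearMap.congr_fun h₀ x)⟩⟩
  obtain ⟨φ, hφf, hφg, hφ⟩ := exists_dual_notMem_of_finrank_lt hfg
    ((Nat.add_le_add_right (Submodule.finrank_map_le (leftComp ℓ) K) 2).trans hK)
  exact ⟨⟨f, g, φ, ℓ, hφf, hφg, hℓf, hℓg⟩, rfl, rfl, hφ, hℓ⟩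

lemma hasInvUnipOrthogonal_of_notMem_map
    (ih : ∀ (P : BiorthogonalPair F V) (W' : Submodule F (Module.End F P.core)),
      W' = ⊥ ∨ Module.finrank F W' < Module.finrank F P.core → HasInvUnipOrthogonal W')
    {f g : V} (hg : g ≠ 0) (hfg : f ∉ F ∙ g) (hf : f ∉ W.map (evalAt g))
    (hW : Module.finrank F W + 2 ≤
      Module.finrank F V + Module.finrank F (W.map (evalAt g))) :
    HasInvUnipOrthogonal W := by
  have hWg := finrank_map_add_finrank_inf_ker (evalAt g) W
  set K := W ⊓ LinearMap.ker (evalAt g) with hKdef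
  obtain ⟨P, rfl, rfl, hφ, hℓ⟩ := exists_biorthogonalPair (K := K) hg hfg (by omega)
  refine P.hasInvUnipOrthogonal_of_compress hKdef hf hφ (ih P _ ?_)
  rcases hℓ with hline | ⟨A, hA, hA₀⟩
  · refine .inl ((Submodule.eq_bot_iff _).mpr ?_)
    rintro - ⟨A, hA, rfl⟩
    ext x
    obtain ⟨c, hc⟩ := Submodule.mem_span_singleton.mp (hline A hA.1 x)
    simp [← hc]
  · right
    have hlt : K ⊓ LinearMap.ker (leftComp P.ℓ) < K :=
      inf_le_left.lt_of_not_ge fun h => hA₀ (h hA).2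
    have := Submodule.finrank_lt_finrank_of_lt hlt
    have := P.finrank_core_add_two
    have := Submodule.finrank_map_le P.compress (K ⊓ LinearMap.ker (leftComp P.ℓ))
    omega

theorem hasInvUnipOrthogonal_of_finrank_lt
    (hW : W = ⊥ ∨ Module.finrank F W < Module.finrank F V) : HasInvUnipOrthogonal W := by
  induction hn : Module.finrank F V using Nat.strong_induction_on generalizing V with
  | _ n ih =>
    by_cases hbot : W = ⊥
    · exact hbot ▸ hasInvUnipOrthogonal_bot
    have hlt := hW.resolve_left hbot
    obtain ⟨A, hA, hA₀⟩ := W.ne_bot_iff.mp hbot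
    obtain ⟨g, hg⟩ : ∃ g, A g ≠ 0 := by
      by_contra! h
      exact hA₀ (LinearMap.ext h)
    have hg₀ : g ≠ 0 := fun h => hg (by simp [h])
    have hWg₀ : 0 < Module.finrank F (W.map (evalAt g)) :=
      Module.finrank_pos_iff_exists_ne_zero.mpr
        ⟨⟨A g, A, hA, rfl⟩, fun h => hg (congrArg Subtype.val h)⟩
    have hWg : Module.finrank F (W.map (evalAt g)) ≤ Module.finrank F W :=
      Submodule.finrank_map_le _ W
    have hspan := finrank_span_singleton (K := F) hg₀
    obtain ⟨f, hf, hfg⟩ := exists_notMem_notMem (p := W.map (evalAt g)) (q := F ∙ g)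
      (fun h => by rw [h, finrank_top] at hWg; omega)
      (fun h => by rw [h, finrank_top] at hspan; omega)
    refine hasInvUnipOrthogonal_of_notMem_map (fun P W' hW' => ?_) hg₀ hfg hf (by omega)
    exact ih _ (by have := P.finrank_core_add_two; omega) hW' rfl

end TraceOrthogonal

section LineRange

variable {F : Type*} [Field F] {V : Type*} [AddCommGroup V] [Module F V]
  [FiniteDimensional F V] {W : Submodule F (Module.End F V)} {A : Module.End F V}

lemma apply_mem_span_of_finrank_map_evalAt_le_one {g : V}
    (hW : Module.finrank F (W.map (evalAt g)) ≤ 1) (hA : A ∈ W) {B : Module.End F V}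
    (hB : B ∈ W) (hBg : B g ≠ 0) : A g ∈ F ∙ B g := by
  have hle : F ∙ B g ≤ W.map (evalAt g) :=
    (Submodule.span_singleton_le_iff_mem _ _).mpr ⟨B, hB, rfl⟩
  rw [Submodule.eq_of_le_of_finrank_le hle (hW.trans_eq (finrank_span_singleton hBg).symm)]
  exact ⟨A, hA, rfl⟩

lemma apply_mem_span_of_apply_eq_zero (hW : ∀ g, Module.finrank F (W.map (evalAt g)) ≤ 1)
    (hA : A ∈ W) {B : Module.End F V} (hB : B ∈ W) {x z : V} (hBx : B x = 0) (hBz : B z ≠ 0) :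
    A x ∈ F ∙ B z := by
  have hxz : B (x + z) = B z := by rw [map_add, hBx, zero_add]
  have hAxz := apply_mem_span_of_finrank_map_evalAt_le_one (hW (x + z)) hA hB (hxz ▸ hBz)
  rw [hxz, map_add] at hAxz
  exact ((F ∙ B z).add_mem_iff_left
    (apply_mem_span_of_finrank_map_evalAt_le_one (hW z) hA hB hBz)).mp hAxz

lemma exists_range_le_span_of_finrank_map_evalAt_le_one
    (hW : ∀ g, Module.finrank F (W.map (evalAt g)) ≤ 1) (hW₂ : 2 ≤ Module.finrank F W)
    (hA : A ∈ W) : ∃ v, LinearMap.range A ≤ F ∙ v := by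
  have hmem {B C : Module.End F V} (hB : B ∈ W) (hC : C ∈ W) {z : V} (hz : C z ≠ 0) :
      ∃ c : F, c • C z = B z :=
    Submodule.mem_span_singleton.mp (apply_mem_span_of_finrank_map_evalAt_le_one (hW z) hB hC hz)
  by_contra! hline
  obtain ⟨-, ⟨x, rfl⟩, hx⟩ := SetLike.not_le_iff_exists.mp (hline 0)
  rw [Submodule.span_zero_singleton, Submodule.mem_bot] at hx
  obtain ⟨-, ⟨y, rfl⟩, hy⟩ := SetLike.not_le_iff_exists.mp (hline (A x))
  have hind : ∀ s t : F, s • A x + t • A y = 0 → s = 0 ∧ t = 0 :=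
    LinearIndependent.pair_iff.mp <| (LinearIndependent.pair_iff' hx).mpr fun a ha =>
      hy (Submodule.mem_span_singleton.mpr ⟨a, ha⟩)
  have hW_le : W ≤ F ∙ A := by
    intro B hB
    obtain ⟨c, hc⟩ := hmem hB hA hx
    obtain ⟨d, hd⟩ := hmem hB hA (z := y) fun h => hy (h ▸ zero_mem _)
    obtain ⟨e, he⟩ := hmem hB hA (z := x + y) fun h =>
      one_ne_zero (hind 1 1 (by simpa using h)).1
    rw [map_add, map_add, ← hc, ← hd] at he
    obtain ⟨hec, hed⟩ := hind (e - c) (e - d) (by linear_combination (norm := module) he)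
    have hC : B - c • A ∈ W := W.sub_mem hB (W.smul_mem c hA)
    have hCx : (B - c • A) x = 0 := by simp [hc]
    have hCy : (B - c • A) y = 0 := by
      simp [← hd, ← sub_eq_zero.mp hec, ← sub_eq_zero.mp hed]
    suffices B - c • A = 0 from Submodule.mem_span_singleton.mpr ⟨c, (sub_eq_zero.mp this).symm⟩
    ext z
    by_contra hz
    obtain ⟨a, ha⟩ := Submodule.mem_span_singleton.mp
      (apply_mem_span_of_apply_eq_zero hW hA hC hCx hz)
    obtain ⟨b, hb⟩ := Submodule.mem_span_singleton.mp
      (apply_mem_span_of_apply_eq_zero hW hA hC hCy hz)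
    have hab := hind b (-a) (by rw [← ha, ← hb]; module)
    rw [neg_eq_zero] at hab
    exact hx (by rw [← ha, hab.2, zero_smul])
  have := (Submodule.finrank_mono hW_le).trans (finrank_span_le_card {A})
  rw [Set.toFinset_singleton, Finset.card_singleton] at this
  omega

lemma range_le_span_of_apply_notMem_span (hdim : 3 ≤ Module.finrank F V)
    (hW : ¬ HasInvUnipOrthogonal W) {g : V} (hinj : ∀ B ∈ W, B g = 0 → B = 0)
    (hA : A ∈ W) (hAg : A g ∉ F ∙ g) : LinearMap.range A ≤ F ∙ A g := by
  by_contra hrange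
  obtain ⟨-, ⟨x, rfl⟩, hx⟩ := SetLike.not_le_iff_exists.mp hrange
  have hA₀ : A ≠ 0 := by rintro rfl; exact hAg (zero_mem _)
  have hg : g ≠ 0 := by rintro rfl; exact hAg (by simp)
  obtain ⟨P, hPf, rfl, hφ, hℓ⟩ := exists_biorthogonalPair (K := F ∙ A) hg hAg
    (by rw [finrank_span_singleton hA₀]; omega)
  have hAmem := Submodule.mem_span_singleton_self (R := F) A
  obtain ⟨B, hB, hℓB⟩ := hℓ.resolve_left fun h => hx (h A hAmem x)
  have hℓA : leftComp P.ℓ A ≠ 0 := by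
    obtain ⟨c, rfl⟩ := Submodule.mem_span_singleton.mp hB
    exact fun h => hℓB (((leftComp P.ℓ).map_smul c A).trans (by rw [h, smul_zero]))
  set τ : Module.Dual F (Module.End F V) := LinearMap.trace F P.core ∘ₗ P.compress with hτ
  obtain ⟨α, hα, -⟩ := exists_dual_eq_one_of_notMem (p := (⊥ : Submodule F (Module.End F V))) hA₀
  obtain ⟨ν, hν, hνA⟩ := exists_dual_comp_eq_and_eq_one (τ := (-1 - τ A) • α) (W := F ∙ A)
    (fun C ⟨hC, hC₀⟩ => by
      obtain ⟨c, rfl⟩ := Submodule.mem_span_singleton.mp hC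
      rw [SetLike.mem_coe, LinearMap.mem_ker, map_smul, smul_eq_zero_iff_left hℓA] at hC₀
      rw [hC₀, zero_smul, map_zero]) hφ
  obtain ⟨y, rfl⟩ := (Module.evalEquiv F V).surjective ν
  have hℓAy : P.ℓ (A y) = (-1 - τ A) * α A := hνA A hAmem
  rw [hα, mul_one] at hℓAy
  obtain ⟨μ, hμ⟩ := exists_dual_comp_eq_of_inf_ker (τ := -(τ + P.ℓ ∘ₗ evalAt y)) (W := W)
    (φ := evalAt P.g) fun C hC => by rw [hinj C hC.1 hC.2, map_zero]
  have hμ' {C : Module.End F V} (hC : C ∈ W) : μ (C P.g) = -(τ C + P.ℓ (C y)) := hμ C hC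
  refine hW (P.hasInvUnipOrthogonal (one_mul 1) (X := 1) (by simp) (μ := μ) ?_ hν fun C hC => ?_)
  · rw [hPf, hμ' hA, hℓAy]
    ring
  · rw [hμ' hC, mul_one, hτ, LinearMap.comp_apply]
    ring

omit [FiniteDimensional F V] in
lemma mem_span_singleton_of_forall_mem_span_pair (hdim : 3 ≤ Module.finrank F V) {g u : V}
    (hu : ∀ v ∉ F ∙ g, u ∈ Submodule.span F {g, v}) : u ∈ F ∙ g := by
  have hne_top (s : Finset V) (hs : s.card ≤ 2) : Submodule.span F (s : Set V) ≠ ⊤ := by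
    intro h
    have := finrank_span_finset_le_card (R := F) s
    rw [Set.finrank, h, finrank_top] at this
    omega
  classical
  obtain ⟨v, -, hv⟩ := SetLike.exists_of_lt (hne_top {g} (by simp)).lt_top
  obtain ⟨w, -, hw⟩ := SetLike.exists_of_lt (hne_top {g, v} Finset.card_le_two).lt_top
  rw [Finset.coe_singleton] at hv
  rw [Finset.coe_pair] at hw
  have hgw : w ∉ F ∙ g := fun h => hw (Submodule.span_mono (by simp) h)
  obtain ⟨a, b, hab⟩ := Submodule.mem_span_pair.mp (hu w hgw)
  rcases eq_or_ne b 0 with rfl | hb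
  · exact Submodule.mem_span_singleton.mpr ⟨a, by simpa using hab⟩
  refine absurd (((Submodule.span F {g, v}).smul_mem_iff hb).mp ?_) hw
  rw [← add_sub_cancel_left (a • g) (b • w), hab]
  exact Submodule.sub_mem _ (hu v hv) (Submodule.smul_mem _ a (Submodule.subset_span (by simp)))

omit [FiniteDimensional F V] in
lemma range_le_span_of_apply_mem_span (hdim : 3 ≤ Module.finrank F V) {g : V}
    (hsurj : W.map (evalAt g) = ⊤)
    (hrange : ∀ B ∈ W, B g ∉ F ∙ g → LinearMap.range B ≤ F ∙ B g) (hA : A ∈ W)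
    (hAg : A g ∈ F ∙ g) : LinearMap.range A ≤ F ∙ g := by
  rintro - ⟨x, rfl⟩
  refine mem_span_singleton_of_forall_mem_span_pair hdim fun v hv => ?_
  obtain ⟨B, hB, rfl⟩ : v ∈ W.map (evalAt g) := hsurj ▸ Submodule.mem_top
  rw [evalAt_apply] at hv ⊢
  obtain ⟨c, hc⟩ := Submodule.mem_span_singleton.mp hAg
  have hAB : (A + B) g ∉ F ∙ g := by
    rwa [LinearMap.add_apply, (F ∙ g).add_mem_iff_right hAg]
  obtain ⟨b, hb⟩ := Submodule.mem_span_singleton.mp (hrange B hB hv ⟨x, rfl⟩)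
  obtain ⟨a, ha⟩ := Submodule.mem_span_singleton.mp (hrange _ (W.add_mem hA hB) hAB ⟨x, rfl⟩)
  rw [LinearMap.add_apply, LinearMap.add_apply, ← hc, ← hb] at ha
  exact Submodule.mem_span_pair.mpr ⟨a * c, a - b, by linear_combination (norm := module) ha⟩

theorem exists_range_le_span_of_not_hasInvUnipOrthogonal (hdim : 3 ≤ Module.finrank F V)
    (hWdim : Module.finrank F W = Module.finrank F V) (hW : ¬ HasInvUnipOrthogonal W)
    (hA : A ∈ W) : ∃ v, LinearMap.range A ≤ F ∙ v := by
  by_cases hsmall : ∀ g, Module.finrank F (W.map (evalAt g)) ≤ 1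
  · exact exists_range_le_span_of_finrank_map_evalAt_le_one hsmall (by omega) hA
  push Not at hsmall
  obtain ⟨g, hg⟩ := hsmall
  have hg₀ : g ≠ 0 := by
    rintro rfl
    have hzero : evalAt (F := F) (0 : V) = 0 := LinearMap.ext fun A => A.map_zero
    rw [hzero, Submodule.map_zero, finrank_bot] at hg
    omega
  have hspan : F ∙ g ≠ ⊤ := fun h => by
    have := finrank_span_singleton (K := F) hg₀
    rw [h, finrank_top] at this
    omega
  have hsurj : W.map (evalAt g) = ⊤ := by
    by_contra htop
    obtain ⟨f, hf, hfg⟩ := exists_notMem_notMem htop hspan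
    exact hW (hasInvUnipOrthogonal_of_notMem_map
      (fun _ _ => hasInvUnipOrthogonal_of_finrank_lt) hg₀ hfg hf (by omega))
  have hinj : ∀ B ∈ W, B g = 0 → B = 0 := by
    have hker := finrank_map_add_finrank_inf_ker (evalAt g) W
    rw [hsurj, finrank_top, hWdim, Nat.add_eq_left, Submodule.finrank_eq_zero] at hker
    exact fun B hB hBg => (Submodule.eq_bot_iff _).mp hker B ⟨hB, hBg⟩
  by_cases hAg : A g ∈ F ∙ g
  · exact ⟨g, range_le_span_of_apply_mem_span hdim hsurj
      (fun B hB => range_le_span_of_apply_notMem_span hdim hW hinj hB) hA hAg⟩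
  · exact ⟨A g, range_le_span_of_apply_notMem_span hdim hW hinj hA hAg⟩

end LineRange

section RankOnePreserver

variable {F ι E : Type*} [Field F] [AddCommGroup E] [Module F E]

/-- All values of `ψ` are of the form `w rᵗ` with a column `w` that does not depend on the value. -/
def HasCommonColumn (ψ : E →ₗ[F] Matrix ι ι F) : Prop :=
  ∃ w, ∀ p, ∃ r, ψ p = vecMulVec w r

/-- All values of `ψ` are of the form `w rᵗ` with a row `r` that does not depend on the value. -/
def HasCommonRow (ψ : E →ₗ[F] Matrix ι ι F) : Prop :=
  ∃ r, ∀ p, ∃ w, ψ p = vecMulVec w r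

lemma hasCommonColumn_transpose_iff {ψ : E →ₗ[F] Matrix ι ι F} :
    HasCommonColumn ((transposeLinearEquiv ι ι F F).toLinearMap ∘ₗ ψ) ↔ HasCommonRow ψ := by
  refine exists_congr fun w => forall_congr' fun p => exists_congr fun r => ?_
  rw [← transpose_inj, transpose_vecMulVec]
  rfl

lemma exists_eq_vecMulVec_linear {ψ : E →ₗ[F] Matrix ι ι F} {w : ι → F} (hw : w ≠ 0)
    (hψ : ∀ p, ∃ r, ψ p = vecMulVec w r) :
    ∃ R : E →ₗ[F] (ι → F), ∀ p, ψ p = vecMulVec w (R p) := by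
  obtain ⟨i, hi⟩ := Function.ne_iff.mp hw
  refine ⟨(w i)⁻¹ • LinearMap.pi fun j => Matrix.entryLinearMap F F i j ∘ₗ ψ, fun p => ?_⟩
  obtain ⟨r, hr⟩ := hψ p
  rw [hr]
  congr 1
  ext j
  simp [hr, vecMulVec_apply, inv_mul_cancel_left₀ hi]

lemma mem_span_of_vecMulVec_eq_vecMulVec {a b c d : ι → F} (hb : b ≠ 0)
    (h : vecMulVec a b = vecMulVec c d) : a ∈ F ∙ c := by
  obtain ⟨j, hj⟩ := Function.ne_iff.mp hb
  refine Submodule.mem_span_singleton.mpr ⟨d j / b j, funext fun i => ?_⟩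
  rw [Pi.smul_apply, smul_eq_mul, div_mul_eq_mul_div, div_eq_iff hj, mul_comm (d j)]
  exact (congr_fun₂ h i j).symm

lemma mem_span_or_mem_span_of_vecMulVec_add {a b a' b' c d : ι → F} (ha : a ≠ 0) (hb : b ≠ 0)
    (h : vecMulVec a b + vecMulVec a' b' = vecMulVec c d) : a' ∈ F ∙ a ∨ b' ∈ F ∙ b := by
  refine or_iff_not_imp_left.mpr fun ha' => ?_
  have hrow (ψ : Module.Dual F (ι → F)) : ψ a • b + ψ a' • b' = ψ c • d := by
    ext j
    have hcol : b j • a + b' j • a' = d j • c := by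
      ext i
      simpa [vecMulVec_apply, mul_comm] using congr_fun₂ h i j
    simpa [mul_comm] using congrArg ψ hcol
  have haa' : a ∉ F ∙ a' := fun h' => by
    obtain ⟨k, rfl⟩ := Submodule.mem_span_singleton.mp h'
    exact ha' (Submodule.mem_span_singleton.mpr ⟨k⁻¹, inv_smul_smul₀ (left_ne_zero_of_smul ha) a'⟩)
  obtain ⟨α, hα, hαa'⟩ := exists_dual_eq_one_of_notMem haa'
  obtain ⟨β, hβ, hβa⟩ := exists_dual_eq_one_of_notMem ha'
  have hbd : b = α c • d := by
    simpa [hα, hαa' a' (Submodule.mem_span_singleton_self a')] using hrow α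
  have hbd' : b' = β c • d := by
    simpa [hβ, hβa a (Submodule.mem_span_singleton_self a)] using hrow β
  have hαc : α c ≠ 0 := fun h0 => hb (by rw [hbd, h0, zero_smul])
  exact Submodule.mem_span_singleton.mpr ⟨β c * (α c)⁻¹, by
    rw [hbd, hbd', smul_smul, inv_mul_cancel_right₀ hαc]⟩

lemma mem_span_or_mem_span_of_eq_vecMulVec {ψ : E →ₗ[F] Matrix ι ι F}
    (hψ : ∀ p, ∃ w r, ψ p = vecMulVec w r) {p q : E} {w r w' r' : ι → F} (hp : ψ p = vecMulVec w r)
    (hp₀ : ψ p ≠ 0) (hq : ψ q = vecMulVec w' r') : w' ∈ F ∙ w ∨ r' ∈ F ∙ r := by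
  obtain ⟨c, d, hcd⟩ := hψ (p + q)
  rw [map_add, hp, hq] at hcd
  rw [hp, Ne, vecMulVec_eq_zero, not_or] at hp₀
  exact mem_span_or_mem_span_of_vecMulVec_add hp₀.1 hp₀.2 hcd

lemma hasCommonColumn_or_hasCommonRow {ψ : E →ₗ[F] Matrix ι ι F}
    (hψ : ∀ p, ∃ w r, ψ p = vecMulVec w r) : HasCommonColumn ψ ∨ HasCommonRow ψ := by
  by_cases hzero : ∀ p, ψ p = 0
  · exact .inl ⟨0, fun p => ⟨0, by rw [hzero, zero_vecMulVec]⟩⟩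
  push Not at hzero
  obtain ⟨p₁, hp₁⟩ := hzero
  obtain ⟨w₁, r₁, h₁⟩ := hψ p₁
  refine or_iff_not_imp_left.mpr fun hcol => ⟨r₁, fun p => ?_⟩
  obtain ⟨p₂, hp₂⟩ : ∃ p₂, ∀ r, ψ p₂ ≠ vecMulVec w₁ r := by
    by_contra! h
    exact hcol ⟨w₁, h⟩
  obtain ⟨w₂, r₂, h₂⟩ := hψ p₂
  have hw₂ : w₂ ∉ F ∙ w₁ := fun h => by
    obtain ⟨c, rfl⟩ := Submodule.mem_span_singleton.mp h
    exact hp₂ (c • r₂) (by rw [h₂, smul_vecMulVec, vecMulVec_smul])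
  have hr₂ : r₂ ∈ F ∙ r₁ := (mem_span_or_mem_span_of_eq_vecMulVec hψ h₁ hp₁ h₂).resolve_left hw₂
  obtain ⟨w, r, h⟩ := hψ p
  by_cases hr : r ∈ F ∙ r₁
  · obtain ⟨c, rfl⟩ := Submodule.mem_span_singleton.mp hr
    exact ⟨c • w, by rw [h, smul_vecMulVec, vecMulVec_smul]⟩
  have hw₁ : w ∈ F ∙ w₁ := (mem_span_or_mem_span_of_eq_vecMulVec hψ h₁ hp₁ h).resolve_right hr
  have hψp₂ : ψ p₂ ≠ 0 := fun h₀ => hp₂ 0 (by rw [h₀, vecMulVec_zero])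
  have hw : w ∈ F ∙ w₂ :=
    (mem_span_or_mem_span_of_eq_vecMulVec hψ h₂ hψp₂ h).resolve_right fun h' =>
      hr ((Submodule.span_singleton_le_iff_mem _ _).mpr hr₂ h')
  obtain ⟨c, rfl⟩ := Submodule.mem_span_singleton.mp hw
  rcases eq_or_ne c 0 with rfl | hc
  · exact ⟨0, by rw [h, zero_smul, zero_vecMulVec, zero_vecMulVec]⟩
  · exact absurd (((F ∙ w₁).smul_mem_iff hc).mp hw₁) hw₂

lemma HasCommonColumn.exists_equiv [Finite ι] [Nonempty ι]
    {ψ : (ι → F) →ₗ[F] Matrix ι ι F} (hψ : Function.Injective ψ) (hcol : HasCommonColumn ψ) :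
    ∃ (w : ι → F) (R : (ι → F) ≃ₗ[F] ι → F), w ≠ 0 ∧ ∀ p, ψ p = vecMulVec w (R p) := by
  obtain ⟨w, hw⟩ := hcol
  have hw₀ : w ≠ 0 := by
    rintro rfl
    obtain ⟨p, hp⟩ := exists_ne (0 : ι → F)
    obtain ⟨r, hr⟩ := hw p
    exact hp ((map_eq_zero_iff ψ hψ).mp (hr.trans (zero_vecMulVec r)))
  obtain ⟨R, hR⟩ := exists_eq_vecMulVec_linear hw₀ hw
  have hRinj : Function.Injective R := fun p q hpq => hψ (by rw [hR, hR, hpq])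
  exact ⟨w, .ofInjectiveEndo R hRinj, hw₀, hR⟩

lemma HasCommonRow.exists_equiv [Finite ι] [Nonempty ι]
    {ψ : (ι → F) →ₗ[F] Matrix ι ι F} (hψ : Function.Injective ψ) (hrow : HasCommonRow ψ) :
    ∃ (r : ι → F) (S : (ι → F) ≃ₗ[F] ι → F), r ≠ 0 ∧ ∀ u, ψ u = vecMulVec (S u) r := by
  obtain ⟨r, S, hr, hS⟩ := (hasCommonColumn_transpose_iff.mpr hrow).exists_equiv
    (transpose_injective.comp hψ)
  exact ⟨r, S, hr, fun u => transpose_injective ((hS u).trans (transpose_vecMulVec _ _).symm)⟩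

lemma vecMulVecBilin_injective {u : ι → F} (hu : u ≠ 0) :
    Function.Injective (vecMulVecBilin F F u : (ι → F) →ₗ[F] Matrix ι ι F) :=
  (injective_iff_map_eq_zero _).mpr fun _ hp => (vecMulVec_eq_zero.mp hp).resolve_left hu

lemma vecMulVecBilin_flip_injective {p : ι → F} (hp : p ≠ 0) :
    Function.Injective ((vecMulVecBilin F F).flip p : (ι → F) →ₗ[F] Matrix ι ι F) :=
  (injective_iff_map_eq_zero _).mpr fun u hu =>
    (vecMulVec_eq_zero.mp (show vecMulVec u p = 0 from hu)).resolve_right hp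

variable {L : Matrix ι ι F →ₗ[F] Matrix ι ι F}

lemma not_hasCommonColumn_flip [Finite ι] [Nontrivial ι] (hL : Function.Injective L)
    {u p : ι → F} (hu : u ≠ 0) (hp : p ≠ 0) (hcol : HasCommonColumn (L ∘ₗ vecMulVecBilin F F u)) :
    ¬ HasCommonColumn (L ∘ₗ (vecMulVecBilin F F).flip p) := by
  intro hcol'
  obtain ⟨w, R, -, hR⟩ := hcol.exists_equiv (hL.comp (vecMulVecBilin_injective hu))
  obtain ⟨w', S, -, hS⟩ := hcol'.exists_equiv (hL.comp (vecMulVecBilin_flip_injective hp))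
  have hw' : w' ∈ F ∙ w := mem_span_of_vecMulVec_eq_vecMulVec
    (S.map_ne_zero_iff.mpr hu) ((hS u).symm.trans (hR p))
  obtain ⟨c, rfl⟩ := Submodule.mem_span_singleton.mp hw'
  have hall (v : ι → F) : v ∈ F ∙ u := by
    refine mem_span_of_vecMulVec_eq_vecMulVec hp (d := R.symm (c • S v)) (hL ?_)
    calc L (vecMulVec v p) = vecMulVec (c • w) (S v) := hS v
      _ = vecMulVec w (R (R.symm (c • S v))) := by
        rw [R.apply_symm_apply, smul_vecMulVec, vecMulVec_smul]
      _ = L (vecMulVec u (R.symm (c • S v))) := (hR _).symm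
  have := Fintype.ofFinite ι
  have hcard := finrank_le_one u fun v => Submodule.mem_span_singleton.mp (hall v)
  rw [Module.finrank_fintype_fun_eq_card] at hcard
  exact Fintype.one_lt_card.not_ge hcard

lemma not_hasCommonRow_flip [Finite ι] [Nontrivial ι] (hL : Function.Injective L)
    {u p : ι → F} (hu : u ≠ 0) (hp : p ≠ 0) (hrow : HasCommonRow (L ∘ₗ vecMulVecBilin F F u)) :
    ¬ HasCommonRow (L ∘ₗ (vecMulVecBilin F F).flip p) := by
  rw [← hasCommonColumn_transpose_iff] at hrow ⊢
  exact not_hasCommonColumn_flip (L := (transposeLinearEquiv ι ι F F).toLinearMap ∘ₗ L)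
    (transpose_injective.comp hL) hu hp hrow

lemma exists_smul_of_forall_mem_span {S S' : (ι → F) ≃ₗ[F] ι → F} (h : ∀ u, S' u ∈ F ∙ S u) :
    ∃ c : F, ∀ u, S' u = c • S u := by
  have hdep (u : ι → F) : ¬ LinearIndependent F ![u, (S'.trans S.symm).toLinearMap u] := by
    obtain ⟨c, hc⟩ := Submodule.mem_span_singleton.mp (h u)
    rw [LinearIndependent.pair_iff]
    exact fun hind => neg_ne_zero.mpr one_ne_zero (hind c (-1) (by simp [← hc])).2
  obtain ⟨c, hc⟩ := LinearMap.exists_eq_smul_id_of_forall_notLinearIndependent hdep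
  exact ⟨c, fun u => by simpa [LinearEquiv.symm_apply_eq] using LinearMap.congr_fun hc u⟩

lemma exists_forall_eq_vecMulVec [Finite ι] [Nonempty ι] (hL : Function.Injective L)
    (hcol : ∀ u ≠ 0, HasCommonColumn (L ∘ₗ vecMulVecBilin F F u))
    (hrow : ∀ p ≠ 0, HasCommonRow (L ∘ₗ (vecMulVecBilin F F).flip p)) :
    ∃ S : (ι → F) ≃ₗ[F] ι → F, ∀ p, ∃ r, ∀ u, L (vecMulVec u p) = vecMulVec (S u) r := by
  obtain ⟨p₀, hp₀⟩ := exists_ne (0 : ι → F)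
  obtain ⟨r₀, S, -, hS⟩ := (hrow p₀ hp₀).exists_equiv
    (hL.comp (vecMulVecBilin_flip_injective hp₀))
  refine ⟨S, fun p => ?_⟩
  rcases eq_or_ne p 0 with rfl | hp
  · exact ⟨0, fun u => by simp⟩
  obtain ⟨r, S', hr, hS'⟩ := (hrow p hp).exists_equiv (hL.comp (vecMulVecBilin_flip_injective hp))
  have hspan (u : ι → F) : S' u ∈ F ∙ S u := by
    rcases eq_or_ne u 0 with rfl | hu
    · simp
    obtain ⟨w, R, -, hR⟩ := (hcol u hu).exists_equiv (hL.comp (vecMulVecBilin_injective hu))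
    have hw : w ∈ F ∙ S u := mem_span_of_vecMulVec_eq_vecMulVec (R.map_ne_zero_iff.mpr hp₀)
      ((hR p₀).symm.trans (hS u))
    exact (Submodule.span_singleton_le_iff_mem _ _).mpr hw
      (mem_span_of_vecMulVec_eq_vecMulVec hr ((hS' u).symm.trans (hR p)))
  obtain ⟨c, hc⟩ := exists_smul_of_forall_mem_span hspan
  exact ⟨c • r, fun u => (hS' u).trans (by rw [hc, smul_vecMulVec, vecMulVec_smul])⟩

variable [Fintype ι]

lemma exists_eq_mul_mul [Nonempty ι] (hL : Function.Injective L)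
    (hcol : ∀ u ≠ 0, HasCommonColumn (L ∘ₗ vecMulVecBilin F F u))
    (hrow : ∀ p ≠ 0, HasCommonRow (L ∘ₗ (vecMulVecBilin F F).flip p)) :
    ∃ Q R, ∀ Y, L Y = Q * Y * R := by
  classical
  obtain ⟨S, hS⟩ := exists_forall_eq_vecMulVec hL hcol hrow
  obtain ⟨u₀, hu₀⟩ := exists_ne (0 : ι → F)
  have hSu₀ : S u₀ ≠ 0 := S.map_ne_zero_iff.mpr hu₀
  obtain ⟨R, hR⟩ := exists_eq_vecMulVec_linear (ψ := L ∘ₗ vecMulVecBilin F F u₀) hSu₀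
    fun p => (hS p).imp fun r hr => hr u₀
  have hSR (u p : ι → F) : L (vecMulVec u p) = vecMulVec (S u) (R p) := by
    obtain ⟨r, hr⟩ := hS p
    rw [hr u, vecMulVecBilin_injective hSu₀ ((hr u₀).symm.trans (hR p))]
  refine ⟨S.toLinearMap.toMatrix', R.toMatrix'ᵀ, LinearMap.congr_fun (f := L)
    (g := LinearMap.mulRight F _ ∘ₗ LinearMap.mulLeft F _) ?_⟩
  refine ext_linearMap F fun i j => LinearMap.ext_ring ?_
  simp [single_eq_single_vecMulVec_single, hSR, mul_vecMulVec, vecMulVec_mul, vecMul_transpose,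
    LinearMap.toMatrix'_mulVec, -mulVec_single]

theorem exists_eq_mul_mul_or_eq_mul_transpose_mul [Nontrivial ι] (hL : Function.Injective L)
    (hrank : ∀ u p, ∃ w r, L (vecMulVec u p) = vecMulVec w r) :
    ∃ Q R, (∀ Y, L Y = Q * Y * R) ∨ ∀ Y, L Y = Q * Yᵀ * R := by
  have hleft (u : ι → F) := hasCommonColumn_or_hasCommonRow (ψ := L ∘ₗ vecMulVecBilin F F u)
    (hrank u)
  have hright (p : ι → F) := hasCommonColumn_or_hasCommonRow
    (ψ := L ∘ₗ (vecMulVecBilin F F).flip p) fun u => hrank u p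
  obtain ⟨u₀, hu₀⟩ := exists_ne (0 : ι → F)
  rcases hleft u₀ with h₀ | h₀
  · have hrow (p) (hp : p ≠ 0) := (hright p).resolve_left (not_hasCommonColumn_flip hL hu₀ hp h₀)
    have hcol (u) (hu : u ≠ 0) := (hleft u).resolve_right fun h =>
      not_hasCommonRow_flip hL hu hu₀ h (hrow u₀ hu₀)
    obtain ⟨Q, R, h⟩ := exists_eq_mul_mul hL hcol hrow
    exact ⟨Q, R, .inl h⟩
  · have hcol (p) (hp : p ≠ 0) := (hright p).resolve_right (not_hasCommonRow_flip hL hu₀ hp h₀)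
    have hrow (u) (hu : u ≠ 0) := (hleft u).resolve_left fun h =>
      not_hasCommonColumn_flip hL hu hu₀ h (hcol u₀ hu₀)
    have hswap (u : ι → F) : (L ∘ₗ (transposeLinearEquiv ι ι F F).toLinearMap) ∘ₗ
        vecMulVecBilin F F u = L ∘ₗ (vecMulVecBilin F F).flip u :=
      LinearMap.ext fun p => congrArg L (transpose_vecMulVec u p)
    have hswap' (p : ι → F) : (L ∘ₗ (transposeLinearEquiv ι ι F F).toLinearMap) ∘ₗ
        (vecMulVecBilin F F).flip p = L ∘ₗ vecMulVecBilin F F p :=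
      LinearMap.ext fun u => congrArg L (transpose_vecMulVec u p)
    obtain ⟨Q, R, h⟩ := exists_eq_mul_mul
      (L := L ∘ₗ (transposeLinearEquiv ι ι F F).toLinearMap) (hL.comp transpose_injective)
      (fun u hu => hswap u ▸ hcol u hu) (fun p hp => hswap' p ▸ hrow p hp)
    exact ⟨Q, R, .inr fun Y => h Yᵀ⟩

end RankOnePreserver

section TraceAdjoint

variable {F ι : Type*} [Field F] [Fintype ι] [DecidableEq ι] {T : Matrix ι ι F →ₗ[F] Matrix ι ι F}

/-- The adjoint of `T` for the trace form `(A, B) ↦ tr (A * B)`. -/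
def traceAdjoint (T : Matrix ι ι F →ₗ[F] Matrix ι ι F) : Matrix ι ι F →ₗ[F] Matrix ι ι F where
  toFun Y := of fun i j => trace (Y * T (single j i 1))
  map_add' Y Z := by ext i j; simp [add_mul]
  map_smul' c Y := by ext i j; simp

lemma trace_traceAdjoint_mul (T : Matrix ι ι F →ₗ[F] Matrix ι ι F) (Y X : Matrix ι ι F) :
    trace (traceAdjoint T Y * X) = trace (Y * T X) := by
  refine LinearMap.congr_fun (f := traceLinearMap ι F F ∘ₗ LinearMap.mulLeft F (traceAdjoint T Y))
    (g := traceLinearMap ι F F ∘ₗ LinearMap.mulLeft F Y ∘ₗ T) ?_ X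
  refine ext_linearMap F fun i j => LinearMap.ext_ring ?_
  simp [trace_mul_single, traceAdjoint]

lemma traceAdjoint_injective (hT : Function.Surjective T) :
    Function.Injective (traceAdjoint T) := fun Y Z h =>
  ext_iff_trace_mul_right.mpr <| hT.forall.mpr fun X => by
    rw [← trace_traceAdjoint_mul, h, trace_traceAdjoint_mul]

lemma eq_mul_mul_of_traceAdjoint_eq_mul_mul {Q R : Matrix ι ι F}
    (h : ∀ Y, traceAdjoint T Y = Q * Y * R) (X : Matrix ι ι F) : T X = R * X * Q :=
  ext_iff_trace_mul_left.mpr fun Y => by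
    rw [← trace_traceAdjoint_mul, h, mul_assoc, mul_assoc, trace_mul_comm]
    simp only [mul_assoc]

lemma eq_mul_transpose_mul_of_traceAdjoint_eq_mul_transpose_mul {Q R : Matrix ι ι F}
    (h : ∀ Y, traceAdjoint T Y = Q * Yᵀ * R) (X : Matrix ι ι F) : T X = Qᵀ * Xᵀ * Rᵀ :=
  ext_iff_trace_mul_left.mpr fun Y => calc
    trace (Y * T X) = trace (Q * Yᵀ * (R * X)) := by
      rw [← trace_traceAdjoint_mul, h, mul_assoc _ R X]
    _ = trace (R * X * Q * Yᵀ) := by rw [trace_mul_comm, mul_assoc _ Q]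
    _ = trace (Y * (Qᵀ * Xᵀ * Rᵀ)) := by
      rw [← trace_transpose]
      simp only [transpose_mul, transpose_transpose, mul_assoc]

lemma exists_eq_vecMulVec_of_range_toLinAlgEquiv_le_span {M : Matrix ι ι F} {v : ι → F}
    (h : LinearMap.range (toLinAlgEquiv' M) ≤ F ∙ v) : ∃ r, M = vecMulVec v r := by
  choose r hr using fun j => Submodule.mem_span_singleton.mp
    (h (LinearMap.mem_range_self (toLinAlgEquiv' M) (Pi.single j 1)))
  refine ⟨r, ?_⟩
  ext i j
  simpa [vecMulVec_apply, mul_comm] using (congrFun (hr j) i).symm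

end TraceAdjoint

section ProdInv3Preserver

variable {F : Type*} [Field F] {n : ℕ}
  {T : Matrix (Fin n) (Fin n) F →ₗ[F] Matrix (Fin n) (Fin n) F}

/-- The `T`-adjoints of the matrices with column space in `F ∙ u`, as endomorphisms; the trace form
pairs them to zero exactly with the `X` such that `T X` kills `u`. -/
def columnSpaceAdjoint (T : Matrix (Fin n) (Fin n) F →ₗ[F] Matrix (Fin n) (Fin n) F)
    (u : Fin n → F) : (Fin n → F) →ₗ[F] Module.End F (Fin n → F) :=
  toLinAlgEquiv'.toLinearMap ∘ₗ traceAdjoint T ∘ₗ vecMulVecBilin F F u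

lemma trace_columnSpaceAdjoint_mul (u p : Fin n → F) (X : Matrix (Fin n) (Fin n) F) :
    LinearMap.trace F _ (columnSpaceAdjoint T u p * toLinAlgEquiv' X) = p ⬝ᵥ (T X *ᵥ u) := by
  calc LinearMap.trace F _ (columnSpaceAdjoint T u p * toLinAlgEquiv' X)
      = LinearMap.trace F _ (toLin' (traceAdjoint T (vecMulVec u p) * X)) := by
        rw [toLin'_mul]; rfl
    _ = p ⬝ᵥ (T X *ᵥ u) := by
        rw [trace_toLin'_eq, trace_traceAdjoint_mul, trace_mul_comm, mul_vecMulVec,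
          trace_vecMulVec, dotProduct_comm]

lemma not_hasInvUnipOrthogonal_range_columnSpaceAdjoint (h2 : (2 : F) ≠ 0)
    (hC : ∀ A ∈ ProdInv3 F n, T A ∈ ProdInv3 F n) {u : Fin n → F} (hu : u ≠ 0) :
    ¬ HasInvUnipOrthogonal (LinearMap.range (columnSpaceAdjoint T u)) := by
  rintro ⟨J, X, hJ, hX, htr⟩
  obtain ⟨J, rfl⟩ := toLinAlgEquiv'.surjective J
  obtain ⟨X, rfl⟩ := toLinAlgEquiv'.surjective X
  have hJ' : J * J = 1 := toLinAlgEquiv'.injective (by simpa using hJ)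
  have hX' : IsNilpotent (J * X - 1) := by
    rw [← IsNilpotent.map_iff (f := toLinAlgEquiv' (R := F) (n := Fin n))
      toLinAlgEquiv'.injective]
    simpa using hX
  have hTX : T X *ᵥ u = 0 := dotProduct_eq_zero _ fun p => by
    rw [dotProduct_comm, ← trace_columnSpaceAdjoint_mul, htr _ (LinearMap.mem_range_self _ p)]
  have hunit := ProdInv3.isUnit
    (hC X (mem_prodInv3_of_isNilpotent_mul_sub_one h2 hJ' hX'))
  exact hu (mulVec_injective_of_isUnit hunit (hTX.trans (mulVec_zero _).symm))

lemma traceAdjoint_vecMulVec_eq_vecMulVec (h2 : (2 : F) ≠ 0) (hn : 3 ≤ n)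
    (hT : Function.Surjective T) (hC : ∀ A ∈ ProdInv3 F n, T A ∈ ProdInv3 F n)
    (u p : Fin n → F) : ∃ w r, traceAdjoint T (vecMulVec u p) = vecMulVec w r := by
  rcases eq_or_ne u 0 with rfl | hu
  · exact ⟨0, 0, by simp⟩
  have hinj : Function.Injective (columnSpaceAdjoint T u) :=
    toLinAlgEquiv'.injective.comp ((traceAdjoint_injective hT).comp (vecMulVecBilin_injective hu))
  obtain ⟨w, hw⟩ := exists_range_le_span_of_not_hasInvUnipOrthogonal (by simpa using hn)
    (LinearMap.finrank_range_of_inj hinj)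
    (not_hasInvUnipOrthogonal_range_columnSpaceAdjoint h2 hC hu) (LinearMap.mem_range_self _ p)
  exact ⟨w, exists_eq_vecMulVec_of_range_toLinAlgEquiv_le_span hw⟩

lemma exists_eq_mul_mul_or_of_three_le (h2 : (2 : F) ≠ 0) (hn : 3 ≤ n)
    (hT : Function.Surjective T) (hC : ∀ A ∈ ProdInv3 F n, T A ∈ ProdInv3 F n) :
    ∃ Q R, (∀ X, T X = Q * X * R) ∨ ∀ X, T X = Q * Xᵀ * R := by
  have : Nontrivial (Fin n) := Fin.nontrivial_iff_two_le.mpr (by omega)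
  obtain ⟨Q, R, h | h⟩ := exists_eq_mul_mul_or_eq_mul_transpose_mul (traceAdjoint_injective hT)
    (traceAdjoint_vecMulVec_eq_vecMulVec h2 hn hT hC)
  · exact ⟨R, Q, .inl (eq_mul_mul_of_traceAdjoint_eq_mul_mul h)⟩
  · exact ⟨Qᵀ, Rᵀ, .inr (eq_mul_transpose_mul_of_traceAdjoint_eq_mul_transpose_mul h)⟩

end ProdInv3Preserver

section TwoByTwo

variable {F : Type*} [Field F]

lemma exists_eq_vecMulVec_of_det_eq_zero {N : Matrix (Fin 2) (Fin 2) F} (hN : N.det = 0) :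
    ∃ w r, N = vecMulVec w r := by
  obtain ⟨v, hv, hNv⟩ := exists_mulVec_eq_zero_iff.mpr hN
  have hker : LinearMap.ker (toLinAlgEquiv' N) ≠ ⊥ := Submodule.ne_bot_iff _ |>.mpr ⟨v, hNv, hv⟩
  have hrank := (toLinAlgEquiv' N).finrank_range_add_finrank_ker
  rw [Module.finrank_fin_fun] at hrank
  have hrange : Module.finrank F (LinearMap.range (toLinAlgEquiv' N)) ≤ 1 := by
    have := Submodule.one_le_finrank_iff.mpr hker
    omega
  obtain ⟨w, hw⟩ := ((Submodule.finrank_le_one_iff_isPrincipal _).mp hrange).principal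
  exact ⟨w, exists_eq_vecMulVec_of_range_toLinAlgEquiv_le_span hw.le⟩

lemma exists_involution_dotProduct_mulVec_eq_zero (a b : Fin 2 → F) :
    ∃ J : Matrix (Fin 2) (Fin 2) F, J * J = 1 ∧ b ⬝ᵥ (J *ᵥ a) = 0 := by
  by_cases hab : b ⬝ᵥ a = 0
  · exact ⟨1, one_mul 1, by rwa [one_mulVec]⟩
  -- otherwise let `J` exchange `a` with a vector orthogonal to `b`
  set P : Matrix (Fin 2) (Fin 2) F := !![a 0, -b 1; a 1, b 0]
  have hP : IsUnit P.det := isUnit_iff_ne_zero.mpr fun h => hab <| by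
    rw [← h, det_fin_two_of, vec2_dotProduct]
    ring
  have hPa : P *ᵥ ![1, 0] = a := by
    ext i
    fin_cases i <;> simp [P]
  have hswap : (!![0, 1; 1, 0] : Matrix (Fin 2) (Fin 2) F) * !![0, 1; 1, 0] = 1 := by
    simp [one_fin_two]
  have hPswap : P *ᵥ (!![0, 1; 1, 0] *ᵥ ![1, 0]) = ![-b 1, b 0] := by
    ext i
    fin_cases i <;> simp [P, vecHead, vecTail]
  refine ⟨P * !![0, 1; 1, 0] * P⁻¹, ?_, ?_⟩
  · calc P * !![0, 1; 1, 0] * P⁻¹ * (P * !![0, 1; 1, 0] * P⁻¹)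
        = P * (!![0, 1; 1, 0] * (P⁻¹ * P) * !![0, 1; 1, 0]) * P⁻¹ := by simp only [mul_assoc]
      _ = 1 := by rw [nonsing_inv_mul P hP, mul_one, hswap, mul_one, mul_nonsing_inv P hP]
  · have hJa : (P * !![0, 1; 1, 0] * P⁻¹) *ᵥ a = ![-b 1, b 0] := by
      conv_lhs => rw [← hPa]
      rw [mulVec_mulVec, mul_assoc, nonsing_inv_mul P hP, mul_one, ← mulVec_mulVec,
        hPswap]
    rw [hJa, vec2_dotProduct]
    simp [mul_comm]

lemma involution_add_smul_vecMulVec_mem_prodInv3 (h2 : (2 : F) ≠ 0) {n : ℕ}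
    {J : Matrix (Fin n) (Fin n) F} (hJ : J * J = 1) {a b : Fin n → F} (hab : b ⬝ᵥ (J *ᵥ a) = 0)
    (t : F) : J + t • vecMulVec a b ∈ ProdInv3 F n := by
  refine mem_prodInv3_of_isNilpotent_mul_sub_one h2 hJ ⟨2, ?_⟩
  rw [mul_add, hJ, add_sub_cancel_left, Matrix.mul_smul, mul_vecMulVec, sq, smul_mul_smul_comm,
    vecMulVec_mul_vecMulVec, hab, zero_smul, vecMulVec_zero, smul_zero]

lemma exists_det_add_smul_eq (A B : Matrix (Fin 2) (Fin 2) F) :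
    ∃ s, ∀ t : F, (A + t • B).det = A.det + s * t + B.det * t ^ 2 := by
  refine ⟨A 0 0 * B 1 1 + B 0 0 * A 1 1 - A 0 1 * B 1 0 - B 0 1 * A 1 0, fun t => ?_⟩
  simp only [det_fin_two, Matrix.add_apply, Matrix.smul_apply, smul_eq_mul]
  ring

lemma eq_zero_of_forall_quadratic_sq_eq_one (h2 : (2 : F) ≠ 0) {x : F} (hx : x ≠ 0)
    (hx1 : x ^ 2 ≠ 1) {d s m : F} (h : ∀ t : F, (d + s * t + m * t ^ 2) ^ 2 = 1) : m = 0 := by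
  have heven (t : F) (ht : t ≠ 0) : 2 * d * m + s ^ 2 + m ^ 2 * t ^ 2 = 0 := by
    refine (mul_eq_zero.mp ?_).resolve_left (mul_ne_zero h2 (pow_ne_zero 2 ht))
    linear_combination h t + h (-t) - 2 * h 0
  have hm : m ^ 2 * (x ^ 2 - 1) = 0 := by linear_combination heven x hx - heven 1 one_ne_zero
  exact pow_eq_zero_iff two_ne_zero |>.mp ((mul_eq_zero.mp hm).resolve_right (sub_ne_zero.mpr hx1))

lemma companion_mem_prodInv3 {d : F} (hd : d ^ 2 = 1) (t : F) :
    !![0, -d; 1, t] ∈ ProdInv3 F 2 := by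
  refine ⟨!![0, 1; 1, 0], !![1, 0; 0, d], !![1, t; 0, -1], ?_, ?_, ?_, ?_⟩ <;>
    simp [one_fin_two, ← pow_two d, hd]

lemma exists_isUnit_mul_companion_eq {A : Matrix (Fin 2) (Fin 2) F} (hA : ∀ c : F, A ≠ c • 1) :
    ∃ P, IsUnit P ∧ A * P = P * !![0, -A.det; 1, A.trace] := by
  -- the columns of `P` are a vector `(x, y)` that is not an eigenvector, and its image
  obtain ⟨x, y, hxy⟩ : ∃ x y : F,
      x * (A 1 0 * x + A 1 1 * y) - (A 0 0 * x + A 0 1 * y) * y ≠ 0 := by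
    by_contra! h
    have h10 : A 1 0 = 0 := by simpa using h 1 0
    have h01 : A 0 1 = 0 := by simpa using h 0 1
    have h11 : A 1 1 = A 0 0 := by simpa [h10, h01, sub_eq_zero] using h 1 1
    refine hA (A 0 0) ?_
    ext i j
    fin_cases i <;> fin_cases j <;> simp [h10, h01, h11]
  refine ⟨!![x, A 0 0 * x + A 0 1 * y; y, A 1 0 * x + A 1 1 * y], ?_, ?_⟩
  · rw [isUnit_iff_isUnit_det, det_fin_two_of]
    exact hxy.isUnit
  · rw [det_fin_two, trace_fin_two]
    ext i j
    fin_cases i <;> fin_cases j <;> simp [mul_apply, Fin.sum_univ_two] <;> ring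

lemma mem_prodInv3_of_det_sq_eq_one {A : Matrix (Fin 2) (Fin 2) F} (hA : ∀ c : F, A ≠ c • 1)
    (hdet : A.det ^ 2 = 1) : A ∈ ProdInv3 F 2 := by
  obtain ⟨P, hP, hAP⟩ := exists_isUnit_mul_companion_eq hA
  have hconj := ProdInv3.conj hP (companion_mem_prodInv3 hdet A.trace)
  rwa [← hAP, mul_assoc, mul_nonsing_inv P ((isUnit_iff_isUnit_det P).mp hP), mul_one] at hconj

lemma mem_prodInv3_of_det_ne_zero (hF : ∀ x : F, x ≠ 0 → x ^ 2 = 1)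
    {A : Matrix (Fin 2) (Fin 2) F} (hA : A.det ≠ 0) : A ∈ ProdInv3 F 2 := by
  by_cases hscalar : ∃ c : F, A = c • 1
  · obtain ⟨c, rfl⟩ := hscalar
    have hc : c ≠ 0 := by
      rintro rfl
      simp at hA
    refine ⟨c • 1, 1, 1, ?_, one_mul 1, one_mul 1, by simp⟩
    rw [smul_mul_smul_comm, ← sq, hF c hc, one_smul, one_mul]
  · exact mem_prodInv3_of_det_sq_eq_one (not_exists.mp hscalar) (hF _ hA)

variable {T : Matrix (Fin 2) (Fin 2) F →ₗ[F] Matrix (Fin 2) (Fin 2) F}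

lemma det_map_vecMulVec_eq_zero_of_sq_ne_one (h2 : (2 : F) ≠ 0) {x : F} (hx : x ≠ 0)
    (hx1 : x ^ 2 ≠ 1) (hC : ∀ A ∈ ProdInv3 F 2, T A ∈ ProdInv3 F 2) (a b : Fin 2 → F) :
    (T (vecMulVec a b)).det = 0 := by
  obtain ⟨J, hJ, hab⟩ := exists_involution_dotProduct_mulVec_eq_zero a b
  obtain ⟨s, hs⟩ := exists_det_add_smul_eq (T J) (T (vecMulVec a b))
  refine eq_zero_of_forall_quadratic_sq_eq_one h2 hx hx1 (d := (T J).det) (s := s) fun t => ?_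
  rw [← hs, ← map_smul, ← map_add]
  exact ProdInv3.det_sq (hC _ (involution_add_smul_vecMulVec_mem_prodInv3 h2 hJ hab t))

lemma det_map_eq_zero_of_forall_sq_eq_one (hF : ∀ x : F, x ≠ 0 → x ^ 2 = 1)
    (hT : Function.Injective T) (hC : ∀ A ∈ ProdInv3 F 2, T A ∈ ProdInv3 F 2)
    {N : Matrix (Fin 2) (Fin 2) F} (hN : N.det = 0) : (T N).det = 0 := by
  have hfin : Finite F := by
    rw [← Set.finite_univ_iff]
    refine (Set.toFinite {0, 1, -1}).subset fun x _ => or_iff_not_imp_left.mpr fun hx => ?_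
    exact sq_eq_one_iff.mp (hF x hx)
  have hsurj : Set.SurjOn T (ProdInv3 F 2) (ProdInv3 F 2) :=
    ((Set.toFinite _).injOn_iff_bijOn_of_mapsTo hC).mp hT.injOn |>.surjOn
  by_contra hTN
  obtain ⟨A, hA, hAN⟩ := hsurj (mem_prodInv3_of_det_ne_zero hF hTN)
  rw [hT hAN] at hA
  simpa [hN] using ProdInv3.det_sq hA

lemma exists_eq_mul_mul_or_of_fin_two (h2 : (2 : F) ≠ 0) (hT : Function.Injective T)
    (hC : ∀ A ∈ ProdInv3 F 2, T A ∈ ProdInv3 F 2) :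
    ∃ Q R, (∀ X, T X = Q * X * R) ∨ ∀ X, T X = Q * Xᵀ * R := by
  refine exists_eq_mul_mul_or_eq_mul_transpose_mul hT fun a b =>
    exists_eq_vecMulVec_of_det_eq_zero ?_
  by_cases hF : ∀ x : F, x ≠ 0 → x ^ 2 = 1
  · exact det_map_eq_zero_of_forall_sq_eq_one hF hT hC (det_vecMulVec a b)
  · push Not at hF
    obtain ⟨x, hx, hx1⟩ := hF
    exact det_map_vecMulVec_eq_zero_of_sq_ne_one h2 hx hx1 hC a b

end TwoByTwo

theorem stmt1 (F : Type*) [Field F] (hchar : ringChar F ≠ 2) (n : ℕ) (hn : 2 ≤ n)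
    (T : Matrix (Fin n) (Fin n) F →ₗ[F] Matrix (Fin n) (Fin n) F)
    (hT : Function.Bijective T) :
    (T 1 = 1 ∧ ∀ A ∈ ProdInv3 F n, T A ∈ ProdInv3 F n) ↔
      ∃ P : Matrix (Fin n) (Fin n) F, IsUnit P ∧
        ((∀ X, T X = P * X * P⁻¹) ∨ (∀ X, T X = P * Xᵀ * P⁻¹)) := by
  have h2 : (2 : F) ≠ 0 := Ring.two_ne_zero hchar
  refine ⟨fun ⟨hone, hC⟩ => ?_, ?_⟩
  · have hform : ∃ Q R, (∀ X, T X = Q * X * R) ∨ ∀ X, T X = Q * Xᵀ * R := by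
      rcases hn.eq_or_lt with rfl | hn
      · exact exists_eq_mul_mul_or_of_fin_two h2 hT.injective hC
      · exact exists_eq_mul_mul_or_of_three_le h2 hn hT.surjective hC
    obtain ⟨P, R, h⟩ := hform
    have hPR : P * R = 1 := by rcases h with h | h <;> simpa [h] using hone
    rw [← inv_eq_right_inv hPR] at h
    exact ⟨P, IsUnit.of_mul_eq_one R hPR, h⟩
  · rintro ⟨P, hP, h⟩
    have hPP : P * P⁻¹ = 1 := mul_nonsing_inv P ((isUnit_iff_isUnit_det P).mp hP)
    rcases h with h | h
    · exact ⟨by rw [h, mul_one, hPP], fun A hA => h A ▸ ProdInv3.conj hP hA⟩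
    · exact ⟨by rw [h, transpose_one, mul_one, hPP],
        fun A hA => h A ▸ ProdInv3.conj hP (ProdInv3.transpose hA)⟩
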